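/- arXiv:math-ph/0305051 — 3 statements merged into one kernel-verified Lean document; each statement's English description precedes it below -/
import Mathlib

section
/- (Bound on renormalized moments.) Let (c̃_{2m})_{m≥1} be real numbers with c̃_2 = 1 and |c̃_{2m}| ≤ (2m)!·c_V for all m ≥ 1, where c_V < ∞. Define for k ≥ 1: c_{2k} := Σ_{m=1}^{k} Σ_{r=1}^{k} Σ_{1≤j_1,…,j_r≤k} Σ_{1≤l_1<…<l_r≤k} δ_{m,|j|} δ_{k,⟨j,l⟩} · (−1)^{m−1} (2k)! / ( ((2l_1)!)^{j_1} ⋯ ((2l_r)!)^{j_r} ) · ( c̃_{2l_1}^{j_1} ⋯ c̃_{2l_r}^{j_r} ) / ( j_1! ⋯ j_r! ), where |j| = j_1+…+j_r and ⟨j,l⟩ = j_1 l_1 + … + j_r l_r. Then |c_{2k}| ≤ (2k · e^{e^{c_V}/2})^{2k+1} for all k ≥ 1. -/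
noncomputable section
open Finset

open Classical in
/-- The renormalized moments (cumulant-type coefficients) `c_{2k}` determined by the
even moments `ct m = c̃_{2m}` via the inclusion-exclusion formula:
`c_{2k} = Σ_{m=1}^{k} Σ_{r=1}^{k} Σ_{1≤j_1,…,j_r≤k} Σ_{1≤l_1<…<l_r≤k} δ_{m,|j|} δ_{k,⟨j,l⟩}
  (−1)^{m−1} (2k)! / (((2l_1)!)^{j_1} ⋯ ((2l_r)!)^{j_r}) ⋅ (c̃_{2l_1}^{j_1} ⋯ c̃_{2l_r}^{j_r})
  / (j_1! ⋯ j_r!)`. -/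
def renormMoment (ct : ℕ → ℝ) (k : ℕ) : ℝ :=
  ∑ m ∈ Finset.Icc 1 k, ∑ r ∈ Finset.Icc 1 k,
    ∑ j ∈ Fintype.piFinset (fun _ : Fin r => Finset.Icc 1 k),
      ∑ l ∈ (Fintype.piFinset (fun _ : Fin r => Finset.Icc 1 k)).filter
            (fun l => StrictMono l),
        (if m = ∑ i, j i then (1:ℝ) else 0) *
        (if k = ∑ i, j i * l i then (1:ℝ) else 0) *
        ((-1:ℝ)^(m-1) * (Nat.factorial (2*k) : ℝ) /
          (∏ i, ((Nat.factorial (2 * l i) : ℝ)) ^ (j i)) *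
          ((∏ i, (ct (l i)) ^ (j i)) / (∏ i, (Nat.factorial (j i) : ℝ))))

/-!
By the triangle inequality `|c_{2k}|` is at most `(2k)!` times the sum of `∏ c_V^{j_i} / j_i!` over
all `r`, `j` and `l`, without the constraints `m = |j|` and `k = ⟨j, l⟩`. A pair `(j, l)` assigns a
positive multiplicity to each point of an `r`-element subset of `{1, …, k}`, so that this sum is at
most `∑_r (k choose r) (e^{c_V} - 1)^r ≤ e^{k c_V}`. Finally `(2k)! ≤ (2k)^{2k+1}` and
`c_V ≤ e^{c_V}`.
-/

section Counting

variable {α κ R : Type*} [LinearOrder α]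

theorem card_filter_strictMono_piFinset_const (s : Finset α) (r : ℕ)
    [DecidablePred (StrictMono : (Fin r → α) → Prop)] :
    #{l ∈ Fintype.piFinset fun _ : Fin r => s | StrictMono l} = (#s).choose r := by
  rw [← card_powersetCard]
  refine card_nbij (fun l => univ.image l) ?mapsTo ?injOn ?surjOn
  case mapsTo =>
    intro l hl
    obtain ⟨hls, hmono⟩ : (∀ i, l i ∈ s) ∧ StrictMono l := by simpa using hl
    rw [mem_coe, mem_powersetCard, card_image_of_injective _ hmono.injective, card_fin]
    exact ⟨image_subset_iff.2 fun i _ => hls i, rfl⟩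
  case injOn =>
    intro l hl l' hl' himage
    have hrange : Set.range l = Set.range l' := by
      simpa using congrArg (fun t : Finset α => (t : Set α)) himage
    exact ((mem_filter.1 hl).2.range_inj (mem_filter.1 hl').2).1 hrange
  case surjOn =>
    intro t ht
    obtain ⟨hts, hcard⟩ := mem_powersetCard.1 ht
    refine ⟨t.orderEmbOfFin hcard, ?_, image_orderEmbOfFin_univ t hcard⟩
    rw [mem_coe, mem_filter, Fintype.mem_piFinset]
    exact ⟨fun i => hts (t.orderEmbOfFin_mem hcard i), (t.orderEmbOfFin hcard).strictMono⟩

theorem sum_piFinset_sum_strictMono_prod [CommSemiring R] (s : Finset κ) (t : Finset α)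
    (f : κ → R) (r : ℕ) [DecidablePred (StrictMono : (Fin r → α) → Prop)] :
    ∑ j ∈ Fintype.piFinset fun _ : Fin r => s,
        ∑ l ∈ Fintype.piFinset (fun _ : Fin r => t) with StrictMono l, ∏ i, f (j i) =
      (#t).choose r * (∑ a ∈ s, f a) ^ r := by
  simp only [sum_const, card_filter_strictMono_piFinset_const, nsmul_eq_mul, ← mul_sum, sum_pow']

end Counting

section Estimates

open scoped Nat

theorem sum_range_succ_eq_add_sum_Icc {M : Type*} [AddCommMonoid M] (f : ℕ → M) (n : ℕ) :
    ∑ i ∈ range (n + 1), f i = f 0 + ∑ i ∈ Icc 1 n, f i :=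
  sum_range_eq_add_Ico f n.succ_pos

theorem one_add_sum_Icc_choose_mul_pow {R : Type*} [CommSemiring R] (y : R) (n : ℕ) :
    1 + ∑ r ∈ Icc 1 n, n.choose r * y ^ r = (1 + y) ^ n := by
  simp [add_comm 1 y, add_pow, sum_range_succ_eq_add_sum_Icc, mul_comm]

theorem one_add_sum_Icc_pow_div_factorial_le_exp {x : ℝ} (hx : 0 ≤ x) (n : ℕ) :
    1 + ∑ a ∈ Icc 1 n, x ^ a / a ! ≤ Real.exp x := by
  simpa [sum_range_succ_eq_add_sum_Icc] using Real.sum_le_exp_of_nonneg hx (n + 1)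

theorem sum_Icc_choose_mul_sum_pow_le_exp {x : ℝ} (hx : 0 ≤ x) (n k : ℕ) :
    ∑ r ∈ Icc 1 n, n.choose r * (∑ a ∈ Icc 1 k, x ^ a / a !) ^ r ≤ Real.exp (n * x) := by
  calc ∑ r ∈ Icc 1 n, n.choose r * (∑ a ∈ Icc 1 k, x ^ a / a !) ^ r
      ≤ (1 + ∑ a ∈ Icc 1 k, x ^ a / a !) ^ n := by
        rw [← one_add_sum_Icc_choose_mul_pow]
        exact le_add_of_nonneg_left zero_le_one
    _ ≤ Real.exp x ^ n := by
        gcongr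
        exact one_add_sum_Icc_pow_div_factorial_le_exp hx k
    _ = Real.exp (n * x) := (Real.exp_nat_mul x n).symm

theorem factorial_mul_exp_le {k : ℕ} (hk : 1 ≤ k) (x : ℝ) :
    (2 * k)! * Real.exp (k * x) ≤ (2 * k * Real.exp (Real.exp x / 2)) ^ (2 * k + 1) := by
  have hfactorial : ((2 * k)! : ℝ) ≤ (2 * k : ℝ) ^ (2 * k + 1) := by
    exact_mod_cast (Nat.factorial_le_pow (2 * k)).trans
      (Nat.pow_le_pow_right (by lia) (Nat.le_succ _))
  have hexponent : k * x ≤ (2 * k + 1 : ℕ) * (Real.exp x / 2) := by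
    have hxexp : x ≤ Real.exp x :=
      (le_add_of_nonneg_right zero_le_one).trans (Real.add_one_le_exp x)
    calc k * x ≤ k * Real.exp x := by gcongr
      _ ≤ k * Real.exp x + Real.exp x / 2 := le_add_of_nonneg_right (by positivity)
      _ = (2 * k + 1 : ℕ) * (Real.exp x / 2) := by push_cast; ring
  rw [mul_pow, ← Real.exp_nat_mul]
  gcongr

end Estimates

section RenormMoment

open scoped Nat

/-- The summand of `renormMoment ct k` at `(j, l)`, for `m = ∑ i, j i` and without the Kronecker
deltas; each moment is grouped with the factorial that normalizes it. -/
def renormTerm (ct : ℕ → ℝ) (k : ℕ) {r : ℕ} (j l : Fin r → ℕ) : ℝ :=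
  (-1) ^ (∑ i, j i - 1) * (2 * k)! * ∏ i, (ct (l i) / (2 * l i)!) ^ j i / (j i)!

open Classical in
theorem renormMoment_eq_sum_renormTerm (ct : ℕ → ℝ) (k : ℕ) :
    renormMoment ct k =
      ∑ r ∈ Icc 1 k, ∑ j ∈ Fintype.piFinset fun _ : Fin r => Icc 1 k,
        ∑ l ∈ Fintype.piFinset (fun _ : Fin r => Icc 1 k) with StrictMono l,
          if ∑ i, j i ∈ Icc 1 k ∧ k = ∑ i, j i * l i then renormTerm ct k j l else 0 := by
  rw [renormMoment, sum_comm]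
  refine sum_congr rfl fun r _ => ?_
  rw [sum_comm]
  refine sum_congr rfl fun j _ => ?_
  rw [sum_comm]
  refine sum_congr rfl fun l _ => ?_
  simp only [ite_mul, one_mul, zero_mul, sum_ite_eq', ite_and, renormTerm, prod_div_distrib,
    div_pow]
  congr 2
  ring

theorem abs_renormTerm_le {cV : ℝ} {ct : ℕ → ℝ} (k : ℕ) {r : ℕ} (j : Fin r → ℕ) {l : Fin r → ℕ}
    (hct : ∀ i, |ct (l i)| ≤ (2 * l i)! * cV) :
    |renormTerm ct k j l| ≤ (2 * k)! * ∏ i, cV ^ j i / (j i)! := by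
  have habs : |renormTerm ct k j l| = (2 * k)! * ∏ i, (|ct (l i)| / (2 * l i)!) ^ j i / (j i)! := by
    simp [renormTerm, abs_mul, abs_prod, abs_div]
  have hratio (i : Fin r) : |ct (l i)| / (2 * l i)! ≤ cV :=
    (div_le_iff₀' (by positivity)).2 (hct i)
  rw [habs]
  gcongr with i
  exact hratio i

theorem abs_renormMoment_le {cV : ℝ} {ct : ℕ → ℝ} (hcV : 0 ≤ cV)
    (hct : ∀ m, 1 ≤ m → |ct m| ≤ (2 * m)! * cV) (k : ℕ) :
    |renormMoment ct k| ≤ (2 * k)! * Real.exp (k * cV) := by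
  classical
  calc |renormMoment ct k|
      ≤ ∑ r ∈ Icc 1 k, ∑ j ∈ Fintype.piFinset fun _ : Fin r => Icc 1 k,
          ∑ l ∈ Fintype.piFinset (fun _ : Fin r => Icc 1 k) with StrictMono l,
            (2 * k)! * ∏ i, cV ^ j i / (j i)! := by
        rw [renormMoment_eq_sum_renormTerm, ← Real.norm_eq_abs]
        refine norm_sum_le_of_le _ fun r _ => norm_sum_le_of_le _ fun j _ =>
          norm_sum_le_of_le _ fun l hl => ?_
        have hl_pos (i : Fin r) : 1 ≤ l i :=
          (mem_Icc.1 (Fintype.mem_piFinset.1 (mem_filter.1 hl).1 i)).1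
        split_ifs
        · exact abs_renormTerm_le k j fun i => hct _ (hl_pos i)
        · rw [norm_zero]; positivity
    _ = (2 * k)! * ∑ r ∈ Icc 1 k, k.choose r * (∑ a ∈ Icc 1 k, cV ^ a / a !) ^ r := by
        simp only [← mul_sum, sum_piFinset_sum_strictMono_prod _ _ fun a => cV ^ a / (a ! : ℝ),
          Nat.card_Icc, Nat.add_sub_cancel]
    _ ≤ (2 * k)! * Real.exp (k * cV) := by
        gcongr
        exact sum_Icc_choose_mul_sum_pow_le_exp hcV k k

theorem renormMoment_bound_general {cV : ℝ} {ct : ℕ → ℝ}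
    (hct : ∀ m, 1 ≤ m → |ct m| ≤ (2 * m)! * cV) {k : ℕ} (hk : 1 ≤ k) :
    |renormMoment ct k| ≤ (2 * k * Real.exp (Real.exp cV / 2)) ^ (2 * k + 1) := by
  have hcV : 0 ≤ cV :=
    nonneg_of_mul_nonneg_right ((abs_nonneg _).trans (hct 1 le_rfl)) (by positivity)
  exact (abs_renormMoment_le hcV hct k).trans (factorial_mul_exp_le hk cV)

end RenormMoment

/-- **Statement 6.** (Bound on renormalized moments.) If `c̃_2 = 1` and
`|c̃_{2m}| ≤ (2m)!·c_V` for all `m ≥ 1`, then the renormalized moments satisfy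
`|c_{2k}| ≤ (2k · e^{e^{c_V}/2})^{2k+1}` for all `k ≥ 1`. -/
theorem renormMoment_bound (cV : ℝ) (ct : ℕ → ℝ) (hct2 : ct 1 = 1)
    (hctb : ∀ m : ℕ, 1 ≤ m → |ct m| ≤ (Nat.factorial (2*m) : ℝ) * cV) :
    ∀ k : ℕ, 1 ≤ k →
      |renormMoment ct k| ≤ ((2*k : ℝ) * Real.exp (Real.exp cV / 2)) ^ (2*k+1) :=
  fun _ hk => renormMoment_bound_general hctb hk
end
end

section
/- (Uniform bound on energy shells in 3D.) There exists a finite constant C such that for all real a ≤ b, the Lebesgue measure of the set { p ∈ [0,1]³ : a ≤ e_Δ(p) ≤ b } is at most C (b − a). In particular, for all α ∈ ℝ, ε > 0 and j ≥ 0, the measure of { p ∈ [0,1]³ : 2^j ε < |e_Δ(p) − α| ≤ 2^{j+1} ε } is at most C 2^j ε. -/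
noncomputable section
open MeasureTheory Real

/-- The Fourier symbol `e_Δ(k) = 2 Σ_{i=1}^3 sin²(π k_i)` of the lattice kinetic energy
`-½Δ` on `ℤ³`; it takes values in `[0,6]`. -/
def eDelta (k : Fin 3 → ℝ) : ℝ := 2 * ∑ i, Real.sin (π * k i)^2

/-!
The level sets of the one-variable symbol `φ x = 2 sin² (π x)` are small where `|φ'|` is large:
`{s ≤ |φ'|, c ≤ φ ≤ d}` has measure at most `2 (d - c) / s` in `[0, 1]`, by the mean value theorem
on each of the two intervals on which `|φ'| ≥ s`. In dimension `n + 1`, cut the energy shell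
according to the coordinate `i` maximizing `|φ' (p i)|`, and slice the `i`-th piece along that
coordinate. The maximum `|φ' (p i)|` is at least the geometric mean of the other `n` values, so the
slice has measure at most `2 (b - a) ∏ |φ' (p j)| ^ (-1 / n)` over `j ≠ i`. Since `φ'` has only
simple zeros, this product is integrable over the remaining coordinates as soon as `n ≥ 2`.
-/

open Set
open scoped ENNReal NNReal

section ProductMeasure

lemma pi_apply_eq_lintegral_insertNth {n : ℕ} {X : Fin (n + 1) → Type*}
    [∀ j, MeasurableSpace (X j)] (μ : ∀ j, Measure (X j)) [∀ j, SigmaFinite (μ j)]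
    (i : Fin (n + 1)) {S : Set (∀ j, X j)} (hS : MeasurableSet S) :
    Measure.pi μ S =
      ∫⁻ q, μ i {t | i.insertNth t q ∈ S} ∂Measure.pi fun j => μ (i.succAbove j) := by
  have hmp := (measurePreserving_piFinSuccAbove μ i).symm
  rw [← hmp.measure_preimage hS.nullMeasurableSet, Measure.prod_apply_symm (hmp.measurable hS)]
  rfl

lemma lintegral_fin_prod_eq_prod_lintegral {n : ℕ} {X : Fin n → Type*}
    [∀ j, MeasurableSpace (X j)] (μ : ∀ j, Measure (X j)) [∀ j, SigmaFinite (μ j)]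
    {g : ∀ j, X j → ℝ≥0∞} (hg : ∀ j, Measurable (g j)) :
    ∫⁻ q, ∏ j, g j (q j) ∂Measure.pi μ = ∏ j, ∫⁻ x, g j x ∂μ j := by
  induction n with
  | zero => simp
  | succ n ih =>
    have hmp := (measurePreserving_piFinSuccAbove μ 0).symm
    have htail : Measurable fun q : ∀ j : Fin n, X j.succ => ∏ j, g j.succ (q j) :=
      Finset.measurable_prod _ fun j _ => (hg j.succ).comp (measurable_pi_apply j)
    rw [← hmp.lintegral_comp_emb (MeasurableEquiv.measurableEmbedding _), Fin.prod_univ_succ,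
      ← ih (fun j => μ j.succ) fun j => hg j.succ,
      ← lintegral_prod_mul (hg 0).aemeasurable htail.aemeasurable]
    simp_rw [MeasurableEquiv.piFinSuccAbove_symm_apply, Fin.insertNthEquiv, Fin.prod_univ_succ,
      Fin.insertNth_zero]
    rfl

end ProductMeasure

lemma prod_rpow_inv_card_le {ι : Type*} [Fintype ι] [Nonempty ι] {x : ι → ℝ≥0∞} {y : ℝ≥0∞}
    (h : ∀ j, x j ≤ y) : ∏ j, x j ^ (Fintype.card ι : ℝ)⁻¹ ≤ y := by
  calc ∏ j, x j ^ (Fintype.card ι : ℝ)⁻¹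
      ≤ ∏ _j : ι, y ^ (Fintype.card ι : ℝ)⁻¹ := by gcongr with j; exact h j
    _ = y := by
      rw [Finset.prod_const, Finset.card_univ, ENNReal.rpow_inv_natCast_pow Fintype.card_ne_zero]

section LevelSets

variable {X : Type*} {φ : X → ℝ} {w : X → ℝ≥0∞} {a b : ℝ}

/-- The part of the shell `a ≤ ∑ j, φ (p j) ≤ b` on which the weight `w` is largest at the `i`-th
coordinate; ties are kept, so that these parts cover the shell but may overlap. -/
def dominantShell {ι : Type*} [Fintype ι] (φ : X → ℝ) (w : X → ℝ≥0∞) (a b : ℝ) (i : ι) :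
    Set (ι → X) :=
  {p | ∑ j, φ (p j) ∈ Icc a b ∧ ∀ j, w (p j) ≤ w (p i)}

lemma preimage_sum_Icc_subset_iUnion_dominantShell {ι : Type*} [Fintype ι] [Nonempty ι] :
    {p : ι → X | ∑ j, φ (p j) ∈ Icc a b} ⊆ ⋃ i, dominantShell φ w a b i := fun p hp => by
  obtain ⟨i, hi⟩ := Finite.exists_max fun j => w (p j)
  exact mem_iUnion.2 ⟨i, hp, hi⟩

variable [MeasurableSpace X] {μ : Measure X} {K L : ℝ≥0}

lemma measurableSet_dominantShell {ι : Type*} [Fintype ι] (hφ : Measurable φ) (hw : Measurable w)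
    (i : ι) : MeasurableSet (dominantShell φ w a b i) := by
  have hmax : MeasurableSet {p : ι → X | ∀ j, w (p j) ≤ w (p i)} := by
    rw [ofPred_forall]
    exact .iInter fun j => measurableSet_le (by fun_prop) (by fun_prop)
  exact (measurableSet_Icc.preimage (by fun_prop)).inter hmax

/-- `HasLevelSetBound μ φ w K` says that `φ` varies at rate at least `s / K` on the part of the
space where the weight `w` is at least `s`, measured by the size of the level sets of `φ` there; the
model weight is `w = |φ'|`. The bound is multiplied out so that `s = 0` needs no convention. -/
def HasLevelSetBound (μ : Measure X) (φ : X → ℝ) (w : X → ℝ≥0∞) (K : ℝ≥0) : Prop :=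
  ∀ (s : ℝ≥0∞) (c d : ℝ), s * μ {x | s ≤ w x ∧ φ x ∈ Icc c d} ≤ K * ENNReal.ofReal (d - c)

lemma HasLevelSetBound.restrict_union {A B : Set X}
    (hA : HasLevelSetBound (μ.restrict A) φ w K) (hB : HasLevelSetBound (μ.restrict B) φ w L) :
    HasLevelSetBound (μ.restrict (A ∪ B)) φ w (K + L) := fun s c d =>
  calc s * μ.restrict (A ∪ B) {x | s ≤ w x ∧ φ x ∈ Icc c d}
      ≤ s * (μ.restrict A + μ.restrict B) {x | s ≤ w x ∧ φ x ∈ Icc c d} := by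
        gcongr; exact Measure.restrict_union_le A B
    _ ≤ K * ENNReal.ofReal (d - c) + L * ENNReal.ofReal (d - c) := by
        rw [Measure.add_apply, mul_add]; exact add_le_add (hA s c d) (hB s c d)
    _ = ↑(K + L) * ENNReal.ofReal (d - c) := by rw [ENNReal.coe_add, add_mul]

lemma HasLevelSetBound.measure_slice_dominantShell_le {n : ℕ} [NeZero n]
    (h : HasLevelSetBound μ φ w K) (i : Fin (n + 1)) {q : Fin n → X} (hq : ∀ j, w (q j) ≠ 0) :
    μ {t | i.insertNth t q ∈ dominantShell φ w a b i} ≤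
      K * ENNReal.ofReal (b - a) * ∏ j, w (q j) ^ (-(n : ℝ)⁻¹) := by
  set s : ℝ≥0∞ := ∏ j, w (q j) ^ (n : ℝ)⁻¹
  set m : ℝ := ∑ j, φ (q j) with hm
  have hfactor : ∀ j, w (q j) ^ (n : ℝ)⁻¹ ≠ 0 := fun j =>
    (ENNReal.rpow_pos_of_nonneg (hq j).bot_lt (by positivity)).ne'
  have hs0 : s ≠ 0 := Finset.prod_ne_zero_iff.2 fun j _ => hfactor j
  have hsub : {t | i.insertNth t q ∈ dominantShell φ w a b i} ⊆
      {t | s ≤ w t ∧ φ t ∈ Icc (a - m) (b - m)} := by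
    rintro t ⟨⟨ha, hb⟩, hmax⟩
    simp only [Fin.sum_univ_succAbove _ i, Fin.insertNth_apply_same,
      Fin.insertNth_apply_succAbove, ← hm] at ha hb
    have hle : ∀ j, w (q j) ≤ w t := fun j => by simpa using hmax (i.succAbove j)
    exact ⟨by simpa using prod_rpow_inv_card_le hle, by linarith, by linarith⟩
  have hinv : ∏ j, w (q j) ^ (-(n : ℝ)⁻¹) = s⁻¹ := by
    simp only [ENNReal.rpow_neg]
    exact (ENNReal.prod_inv_distrib fun j _ _ _ _ => .inl (hfactor j)).symm
  rw [hinv, ← div_eq_mul_inv, ENNReal.le_div_iff_mul_le (.inl hs0) (.inr (by finiteness)),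
    mul_comm, ← sub_sub_sub_cancel_right b a m]
  grw [hsub]
  exact h s _ _

variable [SigmaFinite μ]

lemma HasLevelSetBound.pi_dominantShell_le {n : ℕ} [NeZero n]
    (h : HasLevelSetBound μ φ w K) (hφ : Measurable φ) (hw : Measurable w)
    (hfin : ∫⁻ x, w x ^ (-(n : ℝ)⁻¹) ∂μ ≠ ∞) (i : Fin (n + 1)) :
    Measure.pi (fun _ => μ) (dominantShell φ w a b i) ≤
      K * ENNReal.ofReal (b - a) * (∫⁻ x, w x ^ (-(n : ℝ)⁻¹) ∂μ) ^ n := by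
  have hpow : Measurable fun x => w x ^ (-(n : ℝ)⁻¹) := hw.pow_const _
  have hneg : -(n : ℝ)⁻¹ < 0 := by simp [NeZero.pos n]
  have hw0 : ∀ᵐ x ∂μ, w x ≠ 0 := (ae_lt_top hpow hfin).mono fun x hx h0 => by
    simp [h0, ENNReal.zero_rpow_of_neg hneg] at hx
  have hq0 : ∀ᵐ q ∂Measure.pi fun _ : Fin n => μ, ∀ j, w (q j) ≠ 0 :=
    ae_all_iff.2 fun j => Measure.tendsto_eval_ae_ae.eventually (p := fun x => w x ≠ 0) hw0
  rw [pi_apply_eq_lintegral_insertNth _ i (measurableSet_dominantShell hφ hw i)]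
  calc ∫⁻ q, μ {t | i.insertNth t q ∈ dominantShell φ w a b i} ∂Measure.pi (fun _ : Fin n => μ)
      ≤ ∫⁻ q, K * ENNReal.ofReal (b - a) * ∏ j, w (q j) ^ (-(n : ℝ)⁻¹)
          ∂Measure.pi (fun _ : Fin n => μ) :=
        lintegral_mono_ae (hq0.mono fun q hq => h.measure_slice_dominantShell_le i hq)
    _ = K * ENNReal.ofReal (b - a) * (∫⁻ x, w x ^ (-(n : ℝ)⁻¹) ∂μ) ^ n := by
      rw [lintegral_const_mul' _ _ (by finiteness),
        lintegral_fin_prod_eq_prod_lintegral _ fun _ => hpow]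
      simp

theorem HasLevelSetBound.pi_sum_mem_Icc_le {n : ℕ} [NeZero n]
    (h : HasLevelSetBound μ φ w K) (hφ : Measurable φ) (hw : Measurable w)
    (hfin : ∫⁻ x, w x ^ (-(n : ℝ)⁻¹) ∂μ ≠ ∞) (a b : ℝ) :
    Measure.pi (fun _ : Fin (n + 1) => μ) {p | ∑ j, φ (p j) ∈ Icc a b} ≤
      (n + 1) * (K * ENNReal.ofReal (b - a) * (∫⁻ x, w x ^ (-(n : ℝ)⁻¹) ∂μ) ^ n) := by
  grw [preimage_sum_Icc_subset_iUnion_dominantShell (w := w), measure_iUnion_fintype_le,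
    Finset.sum_le_sum fun i _ => h.pi_dominantShell_le hφ hw hfin i]
  simp

end LevelSets

section MeanValue

variable {f f' : ℝ → ℝ} {I : Set ℝ} {s : ℝ≥0∞}

lemma mul_edist_le_edist_of_le_enorm_deriv (hI : Convex ℝ I)
    (hf : ∀ x ∈ I, HasDerivAt f (f' x) x) (hs : ∀ x ∈ I, s ≤ ‖f' x‖ₑ) {x y : ℝ}
    (hx : x ∈ I) (hy : y ∈ I) : s * edist x y ≤ edist (f x) (f y) := by
  wlog hxy : x < y generalizing x y
  · rcases (not_lt.1 hxy).eq_or_lt with rfl | hyx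
    · simp
    · simpa only [edist_comm] using this hy hx hyx
  have hsub : Icc x y ⊆ I := hI.ordConnected.out hx hy
  obtain ⟨ξ, hξ, hslope⟩ := exists_hasDerivAt_eq_slope f f' hxy
    (fun z hz => (hf z (hsub hz)).continuousAt.continuousWithinAt)
    fun z hz => hf z (hsub (Ioo_subset_Icc_self hz))
  calc s * edist x y ≤ ‖f' ξ‖ₑ * edist x y := by gcongr; exact hs ξ (hsub (Ioo_subset_Icc_self hξ))
    _ = edist (f x) (f y) := by
      rw [edist_comm x, edist_comm (f x), edist_eq_enorm_sub, edist_eq_enorm_sub, ← enorm_mul,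
        hslope, div_mul_cancel₀ _ (sub_ne_zero.2 hxy.ne')]

lemma mul_volume_le_ediam_image
    (h : ∀ x ∈ I, ∀ y ∈ I, s * edist x y ≤ edist (f x) (f y)) :
    s * volume I ≤ Metric.ediam (f '' I) := by
  grw [Real.volume_le_diam]
  simp only [Metric.ediam, ENNReal.mul_iSup]
  exact iSup₂_le fun x hx => iSup₂_le fun y hy => (h x hx y hy).trans
    (Metric.edist_le_ediam_of_mem (mem_image_of_mem f hx) (mem_image_of_mem f hy))

lemma hasLevelSetBound_of_quasiconcaveOn_enorm_deriv
    (hf : ∀ x ∈ I, HasDerivAt f (f' x) x) (hI : QuasiconcaveOn ℝ I fun x => ‖f' x‖ₑ) :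
    HasLevelSetBound (volume.restrict I) f (fun x => ‖f' x‖ₑ) 1 := fun s c d => by
  have hexpand := fun x hx y hy => mul_edist_le_edist_of_le_enorm_deriv (hI s)
    (fun z hz => hf z hz.1) (fun z hz => hz.2) (x := x) (y := y) hx hy
  rw [Measure.restrict_apply' hI.convex.ordConnected.measurableSet, ENNReal.coe_one, one_mul,
    ← Real.ediam_Icc]
  refine (mul_volume_le_ediam_image (f := f) fun x hx y hy =>
    hexpand x ⟨hx.2, hx.1.1⟩ y ⟨hy.2, hy.1.1⟩).trans (Metric.ediam_mono ?_)
  rintro _ ⟨x, hx, rfl⟩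
  exact hx.1.2

end MeanValue

section Sine

variable {r : ℝ}

lemma periodic_abs_sin : Function.Periodic (fun x => |sin x|) π := fun x => by
  simp only [sin_add_pi, abs_neg]

lemma concaveOn_abs_sin (k : ℤ) : ConcaveOn ℝ (Icc (k * π) ((k + 1) * π)) fun x => |sin x| := by
  have hzero : ConcaveOn ℝ (Icc 0 π) fun x => |sin x| :=
    strictConcaveOn_sin_Icc.concaveOn.congr fun _ hx =>
      (abs_of_nonneg (sin_nonneg_of_mem_Icc hx)).symm
  have htranslate := hzero.translate_left (-(k * π))
  rw [preimage_const_add_Icc, zero_sub, neg_neg,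
    show π - -(k * π) = (k + 1) * π by ring] at htranslate
  exact htranslate.congr fun _ _ => periodic_abs_sin.sub_int_mul_eq k

lemma quasiconcaveOn_enorm_two_pi_mul_sin (k : ℤ) :
    QuasiconcaveOn ℝ (Icc (k / 2 : ℝ) ((k + 1) / 2)) fun x => ‖2 * π * sin (2 * π * x)‖ₑ := by
  have hmono : Monotone fun t : ℝ => ENNReal.ofReal (2 * π * t) :=
    ENNReal.ofReal_mono.comp (monotone_id.const_mul two_pi_pos.le)
  have hscaled := (concaveOn_abs_sin k).comp_linearMap (LinearMap.mulLeft ℝ (2 * π))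
  have hdomain : LinearMap.mulLeft ℝ (2 * π) ⁻¹' Icc (k * π) ((k + 1) * π) =
      Icc (k / 2 : ℝ) ((k + 1) / 2) := by
    refine (preimage_const_mul_Icc₀ _ _ two_pi_pos).trans ?_
    rw [mul_div_mul_right _ _ pi_ne_zero, mul_div_mul_right _ _ pi_ne_zero]
  have hweight : (fun x => ‖2 * π * sin (2 * π * x)‖ₑ) =
      fun x => ENNReal.ofReal (2 * π * |sin (2 * π * x)|) := by
    ext x
    rw [← ofReal_norm, norm_mul, norm_of_nonneg two_pi_pos.le, norm_eq_abs]
  rw [← hdomain, hweight]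
  exact (hscaled.quasiconcaveOn.monotone_comp hmono :)

lemma intervalIntegrable_abs_sin_rpow_zero_pi_div_two (hr : -1 < r) :
    IntervalIntegrable (fun x => |sin x| ^ r) volume 0 (π / 2) := by
  rcases le_total 0 r with hr0 | hr0
  · exact (continuous_sin.abs.rpow_const fun _ => .inr hr0).intervalIntegrable _ _
  refine ((intervalIntegral.intervalIntegrable_rpow' hr).const_mul ((2 / π) ^ r)).mono_fun'
    (measurable_sin.abs.pow_const r).aestronglyMeasurable
    ((ae_restrict_mem measurableSet_uIoc).mono fun x hx => ?_)
  rw [uIoc_of_le pi_div_two_pos.le] at hx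
  have hx0 : 0 < x := hx.1
  have hjordan : 2 / π * x ≤ |sin x| := by
    simpa only [abs_of_pos hx0] using mul_abs_le_abs_sin ((abs_of_pos hx0).trans_le hx.2)
  have hpos : 0 < 2 / π * x := by positivity
  calc ‖|sin x| ^ r‖ = |sin x| ^ r := norm_of_nonneg (by positivity)
    _ ≤ (2 / π * x) ^ r := rpow_le_rpow_of_nonpos hpos hjordan hr0
    _ = (2 / π) ^ r * x ^ r := mul_rpow (by positivity) hx0.le

lemma intervalIntegrable_abs_sin_rpow (hr : -1 < r) (a b : ℝ) :
    IntervalIntegrable (fun x => |sin x| ^ r) volume a b := by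
  have hright := intervalIntegrable_abs_sin_rpow_zero_pi_div_two hr
  have hleft : IntervalIntegrable (fun x => |sin x| ^ r) volume (-(π / 2)) 0 := by
    rw [IntervalIntegrable.iff_comp_neg]
    simpa using hright.symm
  have hperiodic : Function.Periodic (fun x => |sin x| ^ r) π := periodic_abs_sin.comp (· ^ r)
  refine hperiodic.intervalIntegrable pi_ne_zero (t := -(π / 2)) ?_ a b
  rw [show -(π / 2) + π = π / 2 by ring]
  exact hleft.trans hright

lemma ae_sin_mul_ne_zero {c : ℝ} (hc : c ≠ 0) : ∀ᵐ x : ℝ, sin (c * x) ≠ 0 := by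
  have hcountable : {x : ℝ | sin x = 0}.Countable :=
    (countable_range fun n : ℤ => n * π).mono fun x hx => sin_eq_zero_iff.1 hx
  exact (hcountable.preimage (mul_right_injective₀ hc)).ae_notMem volume

lemma lintegral_enorm_rpow_lt_top {α : Type*} [MeasurableSpace α] {μ : Measure α} {g : α → ℝ}
    (hg : ∀ᵐ x ∂μ, g x ≠ 0) (h : Integrable (fun x => |g x| ^ r) μ) :
    ∫⁻ x, ‖g x‖ₑ ^ r ∂μ < ∞ := by
  refine (lintegral_congr_ae (hg.mono fun x hx => ?_)).trans_lt h.lintegral_lt_top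
  rw [← ofReal_norm, norm_eq_abs, ENNReal.ofReal_rpow_of_pos (abs_pos.2 hx)]

lemma lintegral_enorm_two_pi_mul_sin_rpow_lt_top (hr : -1 < r) :
    ∫⁻ x in Icc 0 1, ‖2 * π * sin (2 * π * x)‖ₑ ^ r < ∞ := by
  have hne : ∀ᵐ x : ℝ, 2 * π * sin (2 * π * x) ≠ 0 :=
    (ae_sin_mul_ne_zero two_pi_pos.ne').mono fun x hx => mul_ne_zero two_pi_pos.ne' hx
  have hint : IntervalIntegrable (fun x => |2 * π * sin (2 * π * x)| ^ r) volume 0 1 := by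
    have hscaled := (intervalIntegrable_abs_sin_rpow hr 0 (2 * π)).comp_mul_left (c := 2 * π)
    rw [zero_div, div_self two_pi_pos.ne'] at hscaled
    simpa only [abs_mul (2 * π), mul_rpow (abs_nonneg (2 * π)) (abs_nonneg (sin _))] using
      hscaled.const_mul (|2 * π| ^ r)
  refine lintegral_enorm_rpow_lt_top (ae_restrict_of_ae hne) ?_
  exact (intervalIntegrable_iff_integrableOn_Icc_of_le zero_le_one).1 hint

end Sine

section KineticSymbol

/-- The Fourier symbol of the lattice kinetic energy `-½Δ` on `ℤ^ι`; `eDelta` is the case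
`ι = Fin 3`. -/
def kineticSymbol {ι : Type*} [Fintype ι] (k : ι → ℝ) : ℝ := 2 * ∑ i, sin (π * k i) ^ 2

lemma hasDerivAt_two_mul_sin_pi_mul_sq (x : ℝ) :
    HasDerivAt (fun x => 2 * sin (π * x) ^ 2) (2 * π * sin (2 * π * x)) x := by
  have hsin : HasDerivAt (fun x => sin (π * x)) (cos (π * x) * π) x := by
    simpa using ((hasDerivAt_id x).const_mul π).sin
  refine ((hsin.pow 2).const_mul 2).congr_deriv ?_
  rw [mul_assoc 2 π x, sin_two_mul]
  ring

lemma hasLevelSetBound_two_mul_sin_pi_mul_sq :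
    HasLevelSetBound (volume.restrict (Icc 0 1)) (fun x => 2 * sin (π * x) ^ 2)
      (fun x => ‖2 * π * sin (2 * π * x)‖ₑ) 2 := by
  have hhalf := fun k : ℤ => hasLevelSetBound_of_quasiconcaveOn_enorm_deriv
    (fun x _ => hasDerivAt_two_mul_sin_pi_mul_sq x) (quasiconcaveOn_enorm_two_pi_mul_sin k)
  have hunion := (hhalf 0).restrict_union (hhalf 1)
  have hcover : Icc (((0 : ℤ) : ℝ) / 2) (((0 : ℤ) + 1) / 2) ∪
      Icc (((1 : ℤ) : ℝ) / 2) (((1 : ℤ) + 1) / 2) = Icc 0 1 := by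
    norm_num [Icc_union_Icc_eq_Icc]
  rwa [hcover, one_add_one_eq_two] at hunion

theorem exists_volume_kineticSymbol_mem_Icc_le {d : ℕ} (hd : 3 ≤ d) :
    ∃ C : ℝ, 0 ≤ C ∧ ∀ a b : ℝ,
      volume {p : Fin d → ℝ | p ∈ Icc 0 1 ∧ kineticSymbol p ∈ Icc a b} ≤
        ENNReal.ofReal (C * (b - a)) := by
  obtain ⟨n, rfl⟩ : ∃ n, d = n + 1 := ⟨d - 1, by lia⟩
  have : NeZero n := ⟨by lia⟩
  have hr : -1 < -(n : ℝ)⁻¹ := neg_lt_neg (inv_lt_one_of_one_lt₀ (by norm_cast; lia))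
  set J := ∫⁻ x in Icc 0 1, ‖2 * π * sin (2 * π * x)‖ₑ ^ (-(n : ℝ)⁻¹) with hJ
  have hJ_top : J ≠ ∞ := (lintegral_enorm_two_pi_mul_sin_rpow_lt_top hr).ne
  refine ⟨((n + 1) * (2 * J ^ n)).toReal, ENNReal.toReal_nonneg, fun a b => ?_⟩
  have hcube : Measure.pi (fun _ : Fin (n + 1) => volume.restrict (Icc (0 : ℝ) 1)) =
      volume.restrict (Icc 0 1) := by
    rw [← Measure.restrict_pi_pi, pi_univ_Icc]; rfl
  have hset : {p : Fin (n + 1) → ℝ | p ∈ Icc 0 1 ∧ kineticSymbol p ∈ Icc a b} =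
      {p | ∑ i, 2 * sin (π * p i) ^ 2 ∈ Icc a b} ∩ Icc 0 1 := by
    simp only [← Finset.mul_sum]; exact inter_comm _ _
  rw [hset, ← Measure.restrict_apply' measurableSet_Icc, ← hcube,
    ENNReal.ofReal_mul ENNReal.toReal_nonneg, ENNReal.ofReal_toReal (by finiteness)]
  refine (hasLevelSetBound_two_mul_sin_pi_mul_sq.pi_sum_mem_Icc_le
    (by fun_prop) (by fun_prop) hJ_top a b).trans_eq ?_
  rw [← hJ, ENNReal.coe_ofNat]
  ring

end KineticSymbol

theorem energy_shell_bound_3d_general {d : ℕ} (hd : 3 ≤ d) :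
    ∃ C : ℝ, 0 ≤ C ∧
      (∀ a b : ℝ,
        volume {p : Fin d → ℝ | p ∈ Icc 0 1 ∧ a ≤ kineticSymbol p ∧ kineticSymbol p ≤ b}
          ≤ ENNReal.ofReal (C * (b - a))) ∧
      (∀ α ε : ℝ, ∀ j : ℕ,
        volume {p : Fin d → ℝ | p ∈ Icc 0 1 ∧
            2 ^ j * ε < |kineticSymbol p - α| ∧ |kineticSymbol p - α| ≤ 2 ^ (j + 1) * ε}
          ≤ ENNReal.ofReal (C * 2 ^ j * ε)) := by
  obtain ⟨C, hC, hshell⟩ := exists_volume_kineticSymbol_mem_Icc_le hd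
  refine ⟨4 * C, by positivity, fun a b => ?_, fun α ε j => ?_⟩
  · calc volume {p : Fin d → ℝ | p ∈ Icc 0 1 ∧ kineticSymbol p ∈ Icc a b}
        ≤ ENNReal.ofReal (C * (b - a)) := hshell a b
      _ ≤ ENNReal.ofReal 4 * ENNReal.ofReal (C * (b - a)) :=
        le_mul_of_one_le_left' (by norm_num)
      _ = ENNReal.ofReal (4 * C * (b - a)) := by
        rw [mul_assoc, ENNReal.ofReal_mul zero_le_four]
  · have hsub : {p : Fin d → ℝ | p ∈ Icc 0 1 ∧
        2 ^ j * ε < |kineticSymbol p - α| ∧ |kineticSymbol p - α| ≤ 2 ^ (j + 1) * ε} ⊆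
        {p | p ∈ Icc 0 1 ∧
          kineticSymbol p ∈ Icc (α - 2 ^ (j + 1) * ε) (α + 2 ^ (j + 1) * ε)} := fun p hp =>
      ⟨hp.1, mem_Icc_iff_abs_le.1 (abs_sub_comm α _ ▸ hp.2.2)⟩
    grw [hsub, hshell]
    exact (congrArg ENNReal.ofReal (by ring)).le

/-- **Statement 10.** (Uniform bound on energy shells in 3D.) The Lebesgue measure of
`{p ∈ [0,1]³ : a ≤ e_Δ(p) ≤ b}` is at most `C (b − a)`, uniformly in `a ≤ b`; in
particular dyadic shells `{2^j ε < |e_Δ − α| ≤ 2^{j+1} ε}` have measure at most `C 2^j ε`. -/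
theorem energy_shell_bound_3d :
    ∃ C : ℝ, 0 ≤ C ∧
      (∀ a b : ℝ, a ≤ b →
        volume {p : Fin 3 → ℝ | p ∈ Set.Icc 0 1 ∧ a ≤ eDelta p ∧ eDelta p ≤ b}
          ≤ ENNReal.ofReal (C * (b - a))) ∧
      (∀ α ε : ℝ, 0 < ε → ∀ j : ℕ,
        volume {p : Fin 3 → ℝ | p ∈ Set.Icc 0 1 ∧
            2^j * ε < |eDelta p - α| ∧ |eDelta p - α| ≤ 2^(j+1) * ε}
          ≤ ENNReal.ofReal (C * 2^j * ε)) := by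
  obtain ⟨C, hC, hshell, hdyadic⟩ := energy_shell_bound_3d_general le_rfl
  exact ⟨C, hC, fun a b _ => hshell a b, fun α ε _ j => hdyadic α ε j⟩
end
end

section
/- (Measure of the near-degenerate parameter set.) For real α, β define α_1(k) := −cos 2πk + 3 − β and α_2(k) = α_3(k) := −cos 2πk + 3 − α, and for 0 < τ < 1 set U_τ := { (p_3, q_3) ∈ [0,1]² : |α_1(q_3)| < τ, |α_2(p_3)| < τ, |α_3(p_3 − q_3)| < τ } (arguments modulo 1). Then there exists a finite constant C, uniform in α, β and τ, such that the Lebesgue measure of U_τ is at most C √τ. -/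
/-!
The set is contained in a strip `S × [0,1]`, where `S` is the set of `p₃` with `|α_2(p₃)| < τ`.
Since `1 - cos` is superadditive on `[0, π]`, its quadratic lower bound at `0` propagates to
`cos x - cos y ≥ (2 / π²) (y - x)²` for `0 ≤ x ≤ y ≤ π`. Hence the angles in one period at which
`cos` is within `τ` of a given level lie in two sets of diameter at most `π √τ`, one in each
half-period, and rescaling by `2π` bounds the measure of `S` by `√τ`.
-/

noncomputable section
open MeasureTheory Real

section

open Set Metric

theorem one_sub_cos_add_one_sub_cos_le {u v : ℝ} (hu : 0 ≤ u) (hv : 0 ≤ v) (huv : u + v ≤ π) :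
    (1 - cos u) + (1 - cos v) ≤ 1 - cos (u + v) := by
  have gap_eq : 1 - cos (u + v) - ((1 - cos u) + (1 - cos v)) =
      4 * cos ((u + v) / 2) * (sin (u / 2) * sin (v / 2)) := by
    have half_sum : cos (u + v) = 2 * cos ((u + v) / 2) ^ 2 - 1 := by
      rw [← cos_two_mul, mul_div_cancel₀ _ two_ne_zero]
    have sum_to_product : cos u + cos v = 2 * cos ((u + v) / 2) * cos ((u - v) / 2) :=
      cos_add_cos u v
    have half_diff : cos ((u - v) / 2) - cos ((u + v) / 2) = 2 * (sin (u / 2) * sin (v / 2)) := by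
      rw [sub_div, add_div, cos_sub, cos_add]
      ring
    linear_combination sum_to_product - half_sum + 2 * cos ((u + v) / 2) * half_diff
  have cos_nonneg : 0 ≤ cos ((u + v) / 2) :=
    cos_nonneg_of_neg_pi_div_two_le_of_le (by linarith [pi_pos]) (by linarith)
  have sin_u_nonneg : 0 ≤ sin (u / 2) := sin_nonneg_of_nonneg_of_le_pi (by linarith) (by linarith)
  have sin_v_nonneg : 0 ≤ sin (v / 2) := sin_nonneg_of_nonneg_of_le_pi (by linarith) (by linarith)
  rw [← sub_nonneg, gap_eq]
  positivity

theorem two_div_pi_sq_mul_sub_sq_le_cos_sub_cos {x y : ℝ} (hx : 0 ≤ x) (hxy : x ≤ y)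
    (hy : y ≤ π) : 2 / π ^ 2 * (y - x) ^ 2 ≤ cos x - cos y := by
  have quadratic : cos (y - x) ≤ 1 - 2 / π ^ 2 * (y - x) ^ 2 :=
    cos_le_one_sub_mul_cos_sq (abs_le.2 ⟨by linarith [pi_pos], by linarith⟩)
  have superadditive := one_sub_cos_add_one_sub_cos_le hx (sub_nonneg.2 hxy) (by linarith)
  rw [add_sub_cancel] at superadditive
  linarith

theorem dist_le_pi_mul_sqrt_dist_cos {x y : ℝ} (hx : x ∈ Icc 0 π) (hy : y ∈ Icc 0 π) :
    dist x y ≤ π * √(dist (cos x) (cos y) / 2) := by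
  wlog hxy : x ≤ y generalizing x y
  · simpa only [dist_comm] using this hy hx (le_of_not_ge hxy)
  have cos_gap := two_div_pi_sq_mul_sub_sq_le_cos_sub_cos hx.1 hxy hy.2
  rw [dist_comm x, Real.dist_eq, abs_of_nonneg (sub_nonneg.2 hxy), ← div_le_iff₀' pi_pos]
  refine le_sqrt_of_sq_le ?_
  calc ((y - x) / π) ^ 2 = 2 / π ^ 2 * (y - x) ^ 2 / 2 := by ring
    _ ≤ (cos x - cos y) / 2 := by gcongr
    _ ≤ dist (cos x) (cos y) / 2 := by gcongr; exact le_abs_self _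

theorem volume_Icc_zero_pi_inter_preimage_cos_closedBall_le (c τ : ℝ) :
    volume (Icc 0 π ∩ cos ⁻¹' closedBall c τ) ≤ ENNReal.ofReal (π * √τ) := by
  refine (Real.volume_le_diam _).trans (ediam_le fun x ⟨hx, hcx⟩ y ⟨hy, hcy⟩ => ?_)
  rw [edist_dist]
  have dist_cos_le : dist (cos x) (cos y) / 2 ≤ τ := by
    linarith [dist_triangle_right (cos x) (cos y) c, mem_closedBall.1 hcx, mem_closedBall.1 hcy]
  gcongr
  exact (dist_le_pi_mul_sqrt_dist_cos hx hy).trans (by gcongr)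

theorem volume_Icc_zero_two_pi_inter_preimage_cos_closedBall_le (c τ : ℝ) :
    volume (Icc 0 (2 * π) ∩ cos ⁻¹' closedBall c τ) ≤ ENNReal.ofReal (2 * π * √τ) := by
  set A : Set ℝ := Icc 0 π ∩ cos ⁻¹' closedBall c τ
  have cover : Icc 0 (2 * π) ∩ cos ⁻¹' closedBall c τ ⊆ A ∪ (2 * π - ·) ⁻¹' A := by
    rintro θ ⟨⟨h_nonneg, h_le⟩, hcos⟩
    rcases le_total θ π with h | h
    · exact .inl ⟨⟨h_nonneg, h⟩, hcos⟩
    · refine .inr ⟨⟨by linarith, by linarith⟩, ?_⟩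
      rwa [mem_preimage, cos_two_pi_sub]
  have reflect : volume ((2 * π - ·) ⁻¹' A) = volume A :=
    (volume.measurePreserving_sub_left (2 * π)).measure_preimage_equiv
      (f := MeasurableEquiv.subLeft (2 * π)) A
  calc volume (Icc 0 (2 * π) ∩ cos ⁻¹' closedBall c τ)
      ≤ volume A + volume ((2 * π - ·) ⁻¹' A) :=
        (measure_mono cover).trans (measure_union_le _ _)
    _ ≤ ENNReal.ofReal (π * √τ) + ENNReal.ofReal (π * √τ) := by
        rw [reflect]
        gcongr <;> exact volume_Icc_zero_pi_inter_preimage_cos_closedBall_le c τ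
    _ = ENNReal.ofReal (2 * π * √τ) := by
        rw [← ENNReal.ofReal_add (by positivity) (by positivity), ← two_mul, mul_assoc]

theorem volume_Icc_zero_one_inter_preimage_cos_two_pi_mul_closedBall_le (c τ : ℝ) :
    volume (Icc 0 1 ∩ (fun k => cos (2 * π * k)) ⁻¹' closedBall c τ) ≤ ENNReal.ofReal √τ := by
  have rescale : Icc 0 1 ∩ (fun k => cos (2 * π * k)) ⁻¹' closedBall c τ =
      (2 * π * ·) ⁻¹' (Icc 0 (2 * π) ∩ cos ⁻¹' closedBall c τ) := by
    rw [preimage_inter, preimage_const_mul_Icc₀ _ _ two_pi_pos, zero_div, div_self two_pi_pos.ne']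
    rfl
  calc volume (Icc 0 1 ∩ (fun k => cos (2 * π * k)) ⁻¹' closedBall c τ)
      = ENNReal.ofReal (2 * π)⁻¹ * volume (Icc 0 (2 * π) ∩ cos ⁻¹' closedBall c τ) := by
        rw [rescale, Real.volume_preimage_mul_left two_pi_pos.ne',
          abs_of_pos (inv_pos.2 two_pi_pos)]
    _ ≤ ENNReal.ofReal (2 * π)⁻¹ * ENNReal.ofReal (2 * π * √τ) := by
        gcongr
        exact volume_Icc_zero_two_pi_inter_preimage_cos_closedBall_le c τ
    _ = ENNReal.ofReal √τ := by
        rw [← ENNReal.ofReal_mul (by positivity), inv_mul_cancel_left₀ two_pi_pos.ne']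

theorem near_degenerate_set_measure_general (α τ : ℝ) :
    volume {x : ℝ × ℝ | x ∈ Icc (0, 0) (1, 1) ∧ |-cos (2 * π * x.1) + 3 - α| < τ} ≤
      ENNReal.ofReal √τ := by
  set S : Set ℝ := Icc 0 1 ∩ (fun k => cos (2 * π * k)) ⁻¹' closedBall (3 - α) τ
  have subset_strip :
      {x : ℝ × ℝ | x ∈ Icc (0, 0) (1, 1) ∧ |-cos (2 * π * x.1) + 3 - α| < τ} ⊆
        S ×ˢ Icc 0 1 := by
    rintro ⟨p, q⟩ ⟨⟨⟨hp₀, hq₀⟩, hp₁, hq₁⟩, h⟩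
    refine ⟨⟨⟨hp₀, hp₁⟩, ?_⟩, hq₀, hq₁⟩
    rw [mem_preimage, mem_closedBall, dist_comm, Real.dist_eq, sub_right_comm, sub_eq_neg_add 3]
    exact h.le
  calc volume {x : ℝ × ℝ | x ∈ Icc (0, 0) (1, 1) ∧ |-cos (2 * π * x.1) + 3 - α| < τ}
      ≤ volume (S ×ˢ Icc (0 : ℝ) 1) := measure_mono subset_strip
    _ = volume S := by simp [Measure.volume_eq_prod, Measure.prod_prod]
    _ ≤ ENNReal.ofReal √τ :=
        volume_Icc_zero_one_inter_preimage_cos_two_pi_mul_closedBall_le (3 - α) τ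

end

/-- **Statement 17.** (Measure of the near-degenerate parameter set.) With
`α_1(k) := −cos 2πk + 3 − β` and `α_2(k) = α_3(k) := −cos 2πk + 3 − α`, the set
`U_τ = {(p₃,q₃) ∈ [0,1]² : |α_1(q₃)| < τ, |α_2(p₃)| < τ, |α_3(p₃−q₃)| < τ}` has Lebesgue
measure at most `C √τ`, uniformly in `α`, `β` and `0 < τ < 1`. -/
theorem near_degenerate_set_measure :
    ∃ C : ℝ, 0 ≤ C ∧
      ∀ α β τ : ℝ, 0 < τ → τ < 1 →
        volume {x : ℝ × ℝ | x ∈ Set.Icc ((0:ℝ),(0:ℝ)) (1,1) ∧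
            |(-Real.cos (2 * π * x.2) + 3 - β)| < τ ∧
            |(-Real.cos (2 * π * x.1) + 3 - α)| < τ ∧
            |(-Real.cos (2 * π * (x.1 - x.2)) + 3 - α)| < τ}
          ≤ ENNReal.ofReal (C * Real.sqrt τ) := by
  refine ⟨1, zero_le_one, fun α β τ _ _ => ?_⟩
  rw [one_mul]
  exact (near_degenerate_set_measure_general α τ).trans' <|
    measure_mono fun x ⟨hx, _, hp, _⟩ => ⟨hx, hp⟩
end
end
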